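/- (Theorem 2.2, necessity part) Let γ > 1 and let the initial data (τ₀,u₀) satisfy Assumption A. If there exists a point x* ∈ ℝ such that s_x(x*,0) < 0 or r_x(x*,0) < 0 (i.e., the initial data are compressive somewhere), then there is no global-in-time C¹ solution of the Cauchy problem for the p-system: every C¹ solution with this initial data exists only on a time interval [0,T) with T < ∞, and the gradients of (τ,u) blow up in finite time. -/

import Mathlib

open Real Set MeasureTheory Filter

/-- `η(τ) = (2√(K₁γ)/(γ−1)) τ^{−(γ−1)/2}`. -/
noncomputable def etaP (K₁ γ τv : ℝ) : ℝ :=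
  2 * Real.sqrt (K₁ * γ) / (γ - 1) * τv ^ (-(γ - 1) / 2)

/-- Lagrangian sound speed `c(τ) = √(K₁γ) τ^{−(γ+1)/2}`. -/
noncomputable def soundP (K₁ γ τv : ℝ) : ℝ :=
  Real.sqrt (K₁ * γ) * τv ^ (-(γ + 1) / 2)

/-- `K_τ = (2√(K₁γ)/(γ−1))^{2/(γ−1)}`. -/
noncomputable def KtauP (K₁ γ : ℝ) : ℝ :=
  (2 * Real.sqrt (K₁ * γ) / (γ - 1)) ^ (2 / (γ - 1))

/-- `K_c = √(K₁γ) K_τ^{−(γ+1)/2}`. -/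
noncomputable def KcP (K₁ γ : ℝ) : ℝ :=
  Real.sqrt (K₁ * γ) * KtauP K₁ γ ^ (-(γ + 1) / 2)

/-- A `Cᵏ` solution `(τ, u)` of the p-system with `γ`-law pressure `p = K₁ τ^{−γ}`
on `ℝ × I`:  `τ > 0`, both components are `Cᵏ`, and the equations
`τ_t − u_x = 0`, `u_t + (p(τ))_x = 0` hold pointwise. -/
def PSysSol (K₁ γ : ℝ) (I : Set ℝ) (k : ℕ) (τ u : ℝ → ℝ → ℝ) : Prop :=
  (∀ x t, t ∈ I → 0 < τ x t) ∧
  ContDiffOn ℝ k (fun p : ℝ × ℝ => τ p.1 p.2) (Set.univ ×ˢ I) ∧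
  ContDiffOn ℝ k (fun p : ℝ × ℝ => u p.1 p.2) (Set.univ ×ˢ I) ∧
  (∀ x : ℝ, ∀ t ∈ I, deriv (fun t' => τ x t') t - deriv (fun x' => u x' t) x = 0) ∧
  (∀ x : ℝ, ∀ t ∈ I, deriv (fun t' => u x t') t + deriv (fun x' => K₁ * τ x' t ^ (-γ)) x = 0)

/-- Assumption A: `τ₀, u₀` are `C¹` with `‖τ₀‖_{C¹} + ‖u₀‖_{C¹} ≤ M₁` and `τ₀ ≥ M₂ > 0`. -/
def AssumptionA (M₁ M₂ : ℝ) (τ₀ u₀ : ℝ → ℝ) : Prop :=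
  ContDiff ℝ 1 τ₀ ∧ ContDiff ℝ 1 u₀ ∧ 0 < M₁ ∧ 0 < M₂ ∧
  (∀ x, |τ₀ x| + |deriv τ₀ x| + |u₀ x| + |deriv u₀ x| ≤ M₁) ∧
  (∀ x, M₂ ≤ τ₀ x)

/-!
In a backward cone, `|u| + η(τ)` cannot exceed its initial supremum: at a first touching point the
Riemann invariant `s = u + η(τ)` or `-r = η(τ) - u` would increase along a characteristic, where it
is constant. The cone has to contain the characteristics, and it does up to the first touching time
if its speed is `c` at the apex. Hence `τ` is bounded below and `c` above.

Along forward characteristics `y = √c ∂ₓs` satisfies `y' = -α τ^{-(3-γ)/4} y²`, so `y` is bounded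
above by its initial supremum; so is its mirror image for `r`, and therefore also their mean
`√c ∂ₓu`. Since `∂ₜτ = ∂ₓu`, this makes `τ^{(3-γ)/4}` grow at most linearly in time. The Riccati
coefficient thus decays no faster than `1 / t`, its time integral diverges, and `y` reaches `-∞` in
finite time on every characteristic on which it is initially negative.
-/

open Function (uncurry)
open scoped Topology NNReal

section SpaceTimeCalculus

/-- The partial derivative `∂ₓf` of a function `f` of space and time. -/
noncomputable def derivX (f : ℝ → ℝ → ℝ) (x t : ℝ) : ℝ := deriv (fun x' => f x' t) x

variable {f c s : ℝ → ℝ → ℝ} {X : ℝ → ℝ} {I : Set ℝ} {a b x x₀ t t₀ v C : ℝ}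

lemma derivX_eq_fderiv (hf : DifferentiableAt ℝ (uncurry f) (x, t)) :
    derivX f x t = fderiv ℝ (uncurry f) (x, t) (1, 0) :=
  (hf.hasFDerivAt.comp_hasDerivAt (f := fun x' => (x', t)) x
    ((hasDerivAt_id x).prodMk (hasDerivAt_const x t))).deriv

lemma derivX_neg_left (f : ℝ → ℝ → ℝ) (x t : ℝ) :
    derivX (fun x t => f (-x) t) x t = -derivX f (-x) t :=
  deriv_comp_neg (fun x => f x t) x

lemma hasDerivAt_along_path (hf : DifferentiableAt ℝ (uncurry f) (X t, t))
    (hX : HasDerivAt X v t) :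
    HasDerivAt (fun t' => f (X t') t') (deriv (f (X t)) t + v * derivX f (X t) t) t := by
  have hpath := hf.hasFDerivAt.comp_hasDerivAt (f := fun t' => (X t', t')) t
    (hX.prodMk (hasDerivAt_id t))
  have htime : deriv (f (X t)) t = fderiv ℝ (uncurry f) (X t, t) (0, 1) :=
    (hf.hasFDerivAt.comp_hasDerivAt (f := fun t' => (X t, t')) t
      ((hasDerivAt_const t (X t)).prodMk (hasDerivAt_id t))).deriv
  refine hpath.congr_deriv ?_
  rw [htime, derivX_eq_fderiv hf, ← smul_eq_mul, ← map_smul, ← map_add]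
  simp

lemma continuousAt_derivX (hf : ContDiffAt ℝ 1 (uncurry f) (x, t)) :
    ContinuousAt (uncurry (derivX f)) (x, t) := by
  have hfderiv : ContinuousAt (fun p => fderiv ℝ (uncurry f) p (1, 0)) (x, t) :=
    (hf.fderiv_right (m := 0) (by simp)).continuousAt.clm_apply continuousAt_const
  refine hfderiv.congr ?_
  filter_upwards [hf.eventually (by simp)] with p hp
  exact (derivX_eq_fderiv (hp.differentiableAt one_ne_zero)).symm

lemma hasDerivAt_derivX (hf : ContDiffOn ℝ 1 (uncurry f) (univ ×ˢ I)) (ht : t ∈ I) :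
    HasDerivAt (fun x' => f x' t) (derivX f x t) x := by
  have hslice : ContDiff ℝ 1 (fun x' => f x' t) := contDiffOn_univ.1 <|
    hf.comp (f := fun x' => (x', t)) (by fun_prop) fun x' _ => ⟨mem_univ x', ht⟩
  exact (hslice.differentiable one_ne_zero x).hasDerivAt

lemma continuousOn_derivX (hI : UniqueDiffOn ℝ I)
    (hf : ContDiffOn ℝ 1 (uncurry f) (univ ×ˢ I)) :
    ContinuousOn (uncurry (derivX f)) (univ ×ˢ I) := by
  have hfderiv : ContinuousOn (fun p => fderivWithin ℝ (uncurry f) (univ ×ˢ I) p (1, 0))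
      (univ ×ˢ I) :=
    (hf.continuousOn_fderivWithin (uniqueDiffOn_univ.prod hI) le_rfl).clm_apply
      continuousOn_const
  refine hfderiv.congr ?_
  rintro ⟨x, t⟩ hp
  have hpath : HasDerivWithinAt (fun x' : ℝ => (x', t)) (1, 0) univ x :=
    ((hasDerivAt_id x).prodMk (hasDerivAt_const x t)).hasDerivWithinAt
  have hmaps : MapsTo (fun x' : ℝ => (x', t)) univ (univ ×ˢ I) :=
    fun x' _ => ⟨mem_univ x', hp.2⟩
  exact (hasDerivWithinAt_univ.1 <| ((hf.differentiableOn one_ne_zero) (x, t)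
    hp).hasFDerivWithinAt.comp_hasDerivWithinAt x hpath hmaps).deriv

lemma tendsto_spatial_slope (hf : ContDiffAt ℝ 1 (uncurry f) (x, t)) :
    Tendsto (fun q : ℝ × ℝ × ℝ => (f (q.2.1 + q.1) q.2.2 - f q.2.1 q.2.2) / q.1)
      (𝓝[≠] 0 ×ˢ 𝓝 (x, t)) (𝓝 (derivX f x t)) := by
  have hpairs : Tendsto (fun q : ℝ × ℝ × ℝ => ((q.2.1 + q.1, q.2.2), q.2))
      (𝓝[≠] 0 ×ˢ 𝓝 (x, t)) (𝓝 ((x, t), (x, t))) := by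
    have hcont : Continuous fun q : ℝ × ℝ × ℝ => ((q.2.1 + q.1, q.2.2), q.2) := by fun_prop
    refine (hcont.tendsto' (0, x, t) _ (by simp)).mono_left ?_
    exact (Filter.prod_mono_left _ nhdsWithin_le_nhds).trans_eq nhds_prod_eq.symm
  have hremainder := (hf.hasStrictFDerivAt one_ne_zero).isLittleO.comp_tendsto hpairs
  have hratio : Tendsto (fun q : ℝ × ℝ × ℝ =>
      (f (q.2.1 + q.1) q.2.2 - f q.2.1 q.2.2 - q.1 * derivX f x t) / q.1)
      (𝓝[≠] 0 ×ˢ 𝓝 (x, t)) (𝓝 0) := by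
    refine Asymptotics.IsLittleO.tendsto_div_nhds_zero ?_
    refine (hremainder.congr_left fun q => ?_).trans_isBigO ?_
    · have hincrement : (q.2.1 + q.1, q.2.2) - q.2 = q.1 • ((1 : ℝ), (0 : ℝ)) := by
        ext <;> simp
      simp only [Function.comp_apply, hincrement, map_smul, smul_eq_mul,
        ← derivX_eq_fderiv (hf.differentiableAt one_ne_zero)]
      rfl
    · refine Asymptotics.IsBigO.of_bound 1 (.of_forall fun q => ?_)
      simp [Prod.norm_def]
  have hne : ∀ᶠ q : ℝ × ℝ × ℝ in 𝓝[≠] 0 ×ˢ 𝓝 (x, t), q.1 ≠ 0 :=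
    tendsto_fst.eventually eventually_mem_nhdsWithin
  refine (zero_add (derivX f x t) ▸ hratio.add_const _).congr' ?_
  filter_upwards [hne] with q hq
  field_simp
  ring

lemma hasDerivAt_spatial_slope_along_characteristic {h : ℝ}
    (hs_shift : DifferentiableAt ℝ (uncurry s) (X t + h, t))
    (hs : DifferentiableAt ℝ (uncurry s) (X t, t)) (hX : HasDerivAt X (c (X t) t) t)
    (htransport_shift : deriv (s (X t + h)) t + c (X t + h) t * derivX s (X t + h) t = 0)
    (htransport : deriv (s (X t)) t + c (X t) t * derivX s (X t) t = 0) :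
    HasDerivAt (fun t => (s (X t + h) t - s (X t) t) / h)
      (-((c (X t + h) t - c (X t) t) / h * derivX s (X t + h) t)) t := by
  have hshifted := hasDerivAt_along_path (X := fun t' => X t' + h) hs_shift (hX.add_const h)
  refine ((hshifted.sub (hasDerivAt_along_path hs hX)).div_const h).congr_deriv ?_
  rw [eq_neg_of_add_eq_zero_left htransport_shift, eq_neg_of_add_eq_zero_left htransport]
  ring

/-- The equation cannot be differentiated in `x`, since `s` is only `C¹`; instead, the difference
quotients of `s` in `x` are differentiated along `X`, and their derivatives converge locally
uniformly. -/
lemma hasDerivAt_derivX_along_characteristic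
    (hc : ContDiffAt ℝ 1 (uncurry c) (X t₀, t₀)) (hs : ContDiffAt ℝ 1 (uncurry s) (X t₀, t₀))
    (hX : ∀ᶠ t in 𝓝 t₀, HasDerivAt X (c (X t) t) t)
    (htransport : ∀ᶠ p in 𝓝 (X t₀, t₀),
      deriv (s p.1) p.2 + c p.1 p.2 * derivX s p.1 p.2 = 0) :
    HasDerivAt (fun t => derivX s (X t) t)
      (-(derivX c (X t₀) t₀ * derivX s (X t₀) t₀)) t₀ := by
  have hXt₀ : ContinuousAt X t₀ := hX.self_of_nhds.continuousAt
  have hpath : Tendsto (fun t => (X t, t)) (𝓝 t₀) (𝓝 (X t₀, t₀)) := hXt₀.prodMk continuousAt_id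
  have hshift : Tendsto (fun n : ℝ × ℝ => (X n.2 + n.1, n.2)) (𝓝[≠] 0 ×ˢ 𝓝 t₀)
      (𝓝 (X t₀, t₀)) := by
    refine Tendsto.prodMk_nhds ?_ tendsto_snd
    simpa using (hXt₀.tendsto.comp tendsto_snd).add
      (tendsto_fst.mono_right (nhdsWithin_le_nhds (a := (0 : ℝ)) (s := {0}ᶜ)))
  have hregular : ∀ᶠ p in 𝓝 (X t₀, t₀), DifferentiableAt ℝ (uncurry s) p ∧
      deriv (s p.1) p.2 + c p.1 p.2 * derivX s p.1 p.2 = 0 :=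
    ((hs.eventually (by simp)).mono fun p hp => hp.differentiableAt one_ne_zero).and htransport
  refine hasDerivAt_of_tendstoUniformlyOnFilter (l := 𝓝[≠] (0 : ℝ))
    (f := fun h t => (s (X t + h) t - s (X t) t) / h)
    (f' := fun h t => -((c (X t + h) t - c (X t) t) / h * derivX s (X t + h) t))
    (g' := fun t => -(derivX c (X t) t * derivX s (X t) t)) ?_ ?_ ?_
  · have hquotients := ((tendsto_spatial_slope hc).comp (tendsto_id.prodMap hpath)).mul
      ((continuousAt_derivX hs).tendsto.comp hshift) |>.neg
    have hlimit := (((continuousAt_derivX hc).tendsto.comp hpath).mul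
      ((continuousAt_derivX hs).tendsto.comp hpath)).neg
    rw [tendstoUniformlyOnFilter_iff_tendsto]
    exact ((hlimit.comp tendsto_snd).prodMk_nhds hquotients).mono_right (nhds_le_uniformity _)
  · filter_upwards [hshift.eventually hregular, tendsto_snd.eventually (hpath.eventually hregular),
      tendsto_snd.eventually hX] with ⟨h, t⟩ ⟨hs_shift, heq_shift⟩ ⟨hs_path, heq_path⟩ hXt
    exact hasDerivAt_spatial_slope_along_characteristic hs_shift hs_path hXt heq_shift heq_path
  · filter_upwards [hpath.eventually hregular] with t ht
    have hslice : DifferentiableAt ℝ (fun x => s x t) (X t) :=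
      ht.1.comp (f := fun x => (x, t)) (X t) (by fun_prop)
    exact hslice.hasDerivAt.tendsto_slope_zero.congr fun h => by
      rw [smul_eq_mul, inv_mul_eq_div]

lemma exists_characteristic (hc : ContDiffOn ℝ 1 (uncurry c) (univ ×ˢ Icc a b))
    (hC : ∀ x, ∀ t ∈ Icc a b, |c x t| ≤ C) (x₀ : ℝ) (ht₀ : t₀ ∈ Icc a b) :
    ∃ X : ℝ → ℝ, X t₀ = x₀ ∧ ∀ t ∈ Icc a b, HasDerivWithinAt X (c (X t) t) (Icc a b) t := by
  have hC0 : 0 ≤ C := (abs_nonneg _).trans (hC x₀ t₀ ht₀)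
  have hab : 0 ≤ b - a := sub_nonneg.2 (ht₀.1.trans ht₀.2)
  obtain ⟨K, hK⟩ := (hc.mono <| Set.prod_mono_left (subset_univ _)).exists_lipschitzOnWith
    one_ne_zero ((convex_closedBall x₀ (C * (b - a))).prod (convex_Icc a b))
    ((isCompact_closedBall _ _).prod isCompact_Icc)
  have hPicard : IsPicardLindelof (fun t x => c x t) (⟨t₀, ht₀⟩ : Icc a b) x₀
      (⟨C * (b - a), by positivity⟩ : ℝ≥0) 0 ⟨C, hC0⟩ K := by
    refine ⟨fun t ht => ?_, fun x _ => ?_, fun t ht x _ => hC x t ht, ?_⟩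
    · have hslice := hK.comp (LipschitzWith.prodMk_right t).lipschitzOnWith
        (s := Metric.closedBall x₀ (C * (b - a))) fun x hx => ⟨hx, ht⟩
      rw [mul_one] at hslice
      exact hslice
    · exact hc.continuousOn.comp (f := fun t => (x, t)) (by fun_prop) fun t ht => ⟨mem_univ x, ht⟩
    · rw [NNReal.coe_zero, sub_zero]
      exact mul_le_mul_of_nonneg_left (max_le (by linarith [ht₀.1]) (by linarith [ht₀.2])) hC0
  exact hPicard.exists_eq_forall_mem_Icc_hasDerivWithinAt₀

end SpaceTimeCalculus

section OrdinaryDifferentialInequalities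

variable {f f' q y : ℝ → ℝ} {a b d t A B α : ℝ}

lemma nonneg_of_hasDerivAt_of_forall_le (hat : a < t) (hf : HasDerivAt f d t)
    (hle : ∀ t' ∈ Ico a t, f t' ≤ f t) : 0 ≤ d := by
  have hslope : Tendsto (slope f t) (𝓝[<] t) (𝓝 d) :=
    (hasDerivAt_iff_tendsto_slope.1 hf).mono_left (nhdsWithin_mono _ fun _ h => ne_of_lt h)
  refine ge_of_tendsto hslope ?_
  filter_upwards [Ico_mem_nhdsLT hat] with t' ht'
  rw [slope_def_field]
  exact div_nonneg_of_nonpos (sub_nonpos.2 (hle t' ht')) (sub_nonpos.2 ht'.2.le)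

lemma antitoneOn_Icc_of_hasDerivAt_nonpos (hf : ContinuousOn f (Icc a b))
    (hf' : ∀ t ∈ Ioo a b, HasDerivAt f (f' t) t) (hnonpos : ∀ t ∈ Ioo a b, f' t ≤ 0) :
    AntitoneOn f (Icc a b) :=
  antitoneOn_of_hasDerivWithinAt_nonpos (convex_Icc a b) hf
    (fun t ht => (hf' t (by rwa [interior_Icc] at ht)).hasDerivWithinAt)
    fun t ht => hnonpos t (by rwa [interior_Icc] at ht)

lemma antitoneOn_of_riccati (hy : ContinuousOn y (Icc a b))
    (hy' : ∀ t ∈ Ioo a b, HasDerivAt y (-(q t * y t ^ 2)) t) (hq : ∀ t ∈ Ioo a b, 0 ≤ q t) :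
    AntitoneOn y (Icc a b) :=
  antitoneOn_Icc_of_hasDerivAt_nonpos hy hy' fun t ht =>
    neg_nonpos.2 (mul_nonneg (hq t ht) (sq_nonneg _))

/-- Along the flow, `(1 / y)' = q`, which dominates the derivative of `(α / B) log (A + B t)`. -/
lemma riccati_log_lt (hA : 0 < A) (hB : 0 < B) (hα : 0 < α) (hb : 0 ≤ b)
    (hy : ContinuousOn y (Icc 0 b)) (hy' : ∀ t ∈ Ioo 0 b, HasDerivAt y (-(q t * y t ^ 2)) t)
    (hq : ∀ t ∈ Ioo 0 b, α / (A + B * t) ≤ q t) (hy0 : y 0 < 0) :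
    α / B * (log (A + B * b) - log A) < -(y 0)⁻¹ := by
  have hline : ∀ t, 0 ≤ t → 0 < A + B * t := fun t ht => by positivity
  have hanti : AntitoneOn y (Icc 0 b) := antitoneOn_of_riccati hy hy' fun t ht =>
    (div_pos hα (hline t ht.1.le)).le.trans (hq t ht)
  have hneg : ∀ t ∈ Icc 0 b, y t < 0 := fun t ht => (hanti ⟨le_rfl, hb⟩ ht ht.1).trans_lt hy0
  have hcont : ContinuousOn (fun t => α / B * log (A + B * t) - (y t)⁻¹) (Icc 0 b) :=
    (continuousOn_const.mul <| ContinuousOn.log (by fun_prop) fun t ht => (hline t ht.1).ne').sub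
      (hy.inv₀ fun t ht => (hneg t ht).ne)
  have hderiv : ∀ t ∈ Ioo 0 b, HasDerivAt (fun t => α / B * log (A + B * t) - (y t)⁻¹)
      (α / (A + B * t) - q t) t := by
    intro t ht
    have hyt := (hneg t ⟨ht.1.le, ht.2.le⟩).ne
    have hlog := (((hasDerivAt_const_mul B).const_add A).log
      (hline t ht.1.le).ne').const_mul (α / B)
    refine (hlog.sub ((hy' t ht).inv hyt)).congr_deriv ?_
    have := hline t ht.1.le
    field_simp
  have hend := antitoneOn_Icc_of_hasDerivAt_nonpos hcont hderiv
    (fun t ht => sub_nonpos.2 (hq t ht)) ⟨le_rfl, hb⟩ ⟨hb, le_rfl⟩ hb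
  have hinv : (y b)⁻¹ < 0 := inv_lt_zero.2 (hneg b ⟨hb, le_rfl⟩)
  simp only [mul_zero, add_zero] at hend
  linarith

lemma riccati_lifespan_lt (hA : 0 < A) (hB : 0 < B) (hα : 0 < α) (hb : 0 ≤ b)
    (hy : ContinuousOn y (Icc 0 b)) (hy' : ∀ t ∈ Ioo 0 b, HasDerivAt y (-(q t * y t ^ 2)) t)
    (hq : ∀ t ∈ Ioo 0 b, α / (A + B * t) ≤ q t) (hy0 : y 0 < 0) :
    b < A / B * (exp (-(B / (α * y 0))) - 1) := by
  have hlog : log ((A + B * b) / A) < -(B / (α * y 0)) := by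
    rw [log_div (by positivity) hA.ne']
    calc log (A + B * b) - log A = B / α * (α / B * (log (A + B * b) - log A)) := by field_simp
      _ < B / α * -(y 0)⁻¹ := by gcongr; exact riccati_log_lt hA hB hα hb hy hy' hq hy0
      _ = -(B / (α * y 0)) := by rw [mul_neg, ← div_eq_mul_inv, div_div]
  rw [log_lt_iff_lt_exp (by positivity)] at hlog
  calc b = A / B * ((A + B * b) / A - 1) := by field_simp; ring
    _ < A / B * (exp (-(B / (α * y 0))) - 1) := by gcongr

end OrdinaryDifferentialInequalities

section BackwardCone

/-- The part in `t ≥ 0` of the backward cone with apex `(x₀, b)` and opening speed `C`. -/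
def backwardCone (x₀ b C : ℝ) : Set (ℝ × ℝ) :=
  {p | p.2 ∈ Icc 0 b ∧ |p.1 - x₀| ≤ C * (b - p.2)}

variable {G : ℝ → ℝ → ℝ} {x x₀ b t t' v C : ℝ}

lemma isCompact_backwardCone (hC : 0 ≤ C) : IsCompact (backwardCone x₀ b C) := by
  have hcylinder : IsCompact (Metric.closedBall x₀ (C * b) ×ˢ Icc 0 b) :=
    (isCompact_closedBall x₀ (C * b)).prod isCompact_Icc
  refine hcylinder.of_isClosed_subset ((isClosed_Icc.preimage continuous_snd).inter
      (isClosed_le (f := fun p : ℝ × ℝ => |p.1 - x₀|) (by fun_prop) (by fun_prop))) ?_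
  rintro p ⟨ht, hx⟩
  exact ⟨Metric.mem_closedBall.2 (hx.trans (by nlinarith [ht.1])), ht⟩

lemma line_mem_backwardCone (hxt : (x, t) ∈ backwardCone x₀ b C) (hv : |v| ≤ C)
    (ht' : t' ∈ Icc 0 t) : (x + v * (t' - t), t') ∈ backwardCone x₀ b C := by
  obtain ⟨ht, hx⟩ := hxt
  refine ⟨⟨ht'.1, ht'.2.trans ht.2⟩, ?_⟩
  calc |x + v * (t' - t) - x₀| = |(x - x₀) + v * (t' - t)| := by ring_nf
    _ ≤ |x - x₀| + |v| * (t - t') := by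
      grw [abs_add_le, abs_mul, abs_sub_comm t' t, abs_of_nonneg (sub_nonneg.2 ht'.2)]
    _ ≤ C * (b - t) + C * (t - t') :=
      add_le_add hx (mul_le_mul_of_nonneg_right hv (sub_nonneg.2 ht'.2))
    _ = C * (b - t') := by ring

lemma exists_first_zero_in_backwardCone (hC : 0 ≤ C) (hb : 0 ≤ b)
    (hG : ContinuousOn (uncurry G) (backwardCone x₀ b C)) (hG0 : ∀ x, G x 0 < 0)
    (hapex : 0 ≤ G x₀ b) :
    ∃ x t, 0 < t ∧ (x, t) ∈ backwardCone x₀ b C ∧ G x t = 0 ∧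
      ∀ x' t', (x', t') ∈ backwardCone x₀ b C → t' < t → G x' t' < 0 := by
  have hcone := isCompact_backwardCone (x₀ := x₀) (b := b) hC
  have hcompact : IsCompact (backwardCone x₀ b C ∩ uncurry G ⁻¹' Ici 0) :=
    hcone.of_isClosed_subset (hG.preimage_isClosed_of_isClosed hcone.isClosed isClosed_Ici)
      inter_subset_left
  obtain ⟨⟨x, t⟩, ⟨hxt, hnonneg⟩, hmin⟩ := hcompact.exists_isMinOn
    ⟨(x₀, b), ⟨⟨hb, le_rfl⟩, by simp⟩, hapex⟩ continuousOn_snd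
  have hbefore : ∀ x' t', (x', t') ∈ backwardCone x₀ b C → t' < t → G x' t' < 0 :=
    fun x' t' hx't' hlt => not_le.1 fun hge => hlt.not_ge (isMinOn_iff.1 hmin _ ⟨hx't', hge⟩)
  have ht : 0 < t := hxt.1.1.lt_of_ne fun h0 => (hG0 x).not_ge (h0 ▸ hnonneg)
  have hvertical : ∀ t' ∈ Icc 0 t, (x, t') ∈ backwardCone x₀ b C := fun t' ht' => by
    simpa using line_mem_backwardCone (v := 0) hxt (by simpa using hC) ht'
  have hlimit : Tendsto (G x) (𝓝[Ico 0 t] t) (𝓝 (G x t)) :=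
    ((hG.comp (f := fun t' => (x, t')) (by fun_prop) hvertical) t ⟨ht.le, le_rfl⟩).mono_left
      (nhdsWithin_mono t Ico_subset_Icc_self)
  have : (𝓝[Ico 0 t] t).NeBot := by
    rw [← mem_closure_iff_nhdsWithin_neBot, closure_Ico ht.ne]
    exact ⟨ht.le, le_rfl⟩
  refine ⟨x, t, ht, hxt, le_antisymm (le_of_tendsto hlimit ?_) hnonneg, hbefore⟩
  filter_upwards [self_mem_nhdsWithin] with t' ht'
  exact (hbefore x t' (hvertical t' ⟨ht'.1, ht'.2.le⟩) ht'.2).le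

end BackwardCone

section GasLaw

variable {K₁ γ v M₁ M₂ : ℝ}

lemma soundP_pos (hK₁ : 0 < K₁) (hγ : 0 < γ) (hv : 0 < v) : 0 < soundP K₁ γ v :=
  mul_pos (sqrt_pos.2 (mul_pos hK₁ hγ)) (rpow_pos_of_pos hv _)

lemma soundP_sq (hK₁γ : 0 ≤ K₁ * γ) (hv : 0 ≤ v) :
    soundP K₁ γ v ^ 2 = K₁ * γ * v ^ (-γ - 1) := by
  rw [soundP, mul_pow, sq_sqrt hK₁γ, ← rpow_mul_natCast hv]
  congr 2
  push_cast
  ring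

lemma sqrt_soundP (hv : 0 ≤ v) :
    √(soundP K₁ γ v) = √(√(K₁ * γ)) * v ^ (-(γ + 1) / 4) := by
  rw [soundP, sqrt_mul (sqrt_nonneg _), sqrt_eq_rpow (v ^ _), ← rpow_mul hv]
  congr 2
  ring

lemma hasDerivAt_soundP (hv : 0 < v) :
    HasDerivAt (soundP K₁ γ) (-(γ + 1) / 2 * soundP K₁ γ v / v) v := by
  refine ((hasDerivAt_rpow_const (p := -(γ + 1) / 2) (Or.inl hv.ne')).const_mul
    (√(K₁ * γ))).congr_deriv ?_
  rw [rpow_sub_one hv.ne', soundP]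
  ring

lemma hasDerivAt_etaP (hγ : γ ≠ 1) (hv : 0 < v) :
    HasDerivAt (etaP K₁ γ) (-soundP K₁ γ v) v := by
  refine ((hasDerivAt_rpow_const (p := -(γ - 1) / 2) (Or.inl hv.ne')).const_mul
    (2 * √(K₁ * γ) / (γ - 1))).congr_deriv ?_
  have hexp : -(γ - 1) / 2 - 1 = -(γ + 1) / 2 := by ring
  have hγ' : γ - 1 ≠ 0 := sub_ne_zero.2 hγ
  rw [hexp, soundP]
  field_simp

lemma antitoneOn_soundP (hγ : -1 ≤ γ) : AntitoneOn (soundP K₁ γ) (Ioi 0) :=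
  fun _ hv _ _ hvw => mul_le_mul_of_nonneg_left
    (rpow_le_rpow_of_nonpos hv hvw (by linarith)) (sqrt_nonneg _)

lemma etaP_coeff_pos (hK₁ : 0 < K₁) (hγ : 1 < γ) : 0 < 2 * √(K₁ * γ) / (γ - 1) :=
  div_pos (mul_pos two_pos (sqrt_pos.2 (by positivity))) (sub_pos.2 hγ)

lemma strictAntiOn_etaP (hK₁ : 0 < K₁) (hγ : 1 < γ) : StrictAntiOn (etaP K₁ γ) (Ioi 0) :=
  fun _ hv _ _ hvw => mul_lt_mul_of_pos_left
    (rpow_lt_rpow_of_neg hv hvw (by linarith)) (etaP_coeff_pos hK₁ hγ)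

lemma exists_le_etaP (hK₁ : 0 < K₁) (hγ : 1 < γ) (S : ℝ) : ∃ m > 0, S ≤ etaP K₁ γ m := by
  have hlimit : Tendsto (etaP K₁ γ) (𝓝[>] 0) atTop :=
    (tendsto_rpow_neg_nhdsGT_zero (by linarith)).const_mul_atTop (etaP_coeff_pos hK₁ hγ)
  exact (eventually_mem_nhdsWithin.and (hlimit.eventually_ge_atTop S)).exists

/-- The coefficient of the Riccati equation `y' = -a(τ) y²` satisfied along characteristics by the
weighted gradient `y = √c ∂ₓs`. -/
noncomputable def riccatiCoeff (K₁ γ v : ℝ) : ℝ := (γ + 1) / (4 * (v * √(soundP K₁ γ v)))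

lemma riccatiCoeff_pos (hK₁ : 0 < K₁) (hγ : 0 < γ) (hv : 0 < v) : 0 < riccatiCoeff K₁ γ v := by
  have := sqrt_pos.2 (soundP_pos hK₁ hγ hv)
  unfold riccatiCoeff
  positivity

/-- The constant `α` with `a(τ) = α τ^{-(3-γ)/4}` for the Riccati coefficient `a`. -/
noncomputable def riccatiConst (K₁ γ : ℝ) : ℝ := (γ + 1) / (4 * √(√(K₁ * γ)))

lemma riccatiConst_pos (hK₁ : 0 < K₁) (hγ : 0 < γ) : 0 < riccatiConst K₁ γ := by
  unfold riccatiConst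
  positivity

lemma riccatiCoeff_eq (hv : 0 < v) :
    riccatiCoeff K₁ γ v = riccatiConst K₁ γ / v ^ ((3 - γ) / 4) := by
  have hexp : (3 - γ) / 4 = 1 + -(γ + 1) / 4 := by ring
  rw [riccatiCoeff, riccatiConst, sqrt_soundP hv.le, div_div, hexp, rpow_add hv, rpow_one]
  ring_nf

/-- The bound for `√c |∂ₓu ± c ∂ₓτ|` at time zero that Assumption A provides. -/
noncomputable def initialSlopeBound (K₁ γ M₁ M₂ : ℝ) : ℝ :=
  √(soundP K₁ γ M₂) * (M₁ + soundP K₁ γ M₂ * M₁)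

/-- A bound for the lifespan of solutions with `m ≤ τ` throughout, `τ ≤ M` initially,
`√c ∂ₓu ≤ Y` throughout and the negative value `y₀` of the weighted gradient initially: the time
at which the solution of `y' = -α y² / (A + α Y t)`, `y(0) = y₀`, blows up, where
`A = m^{(3-γ)/4} + M^{(3-γ)/4}`. -/
noncomputable def lifespanBound (K₁ γ m M Y y₀ : ℝ) : ℝ :=
  (m ^ ((3 - γ) / 4) + M ^ ((3 - γ) / 4)) / (riccatiConst K₁ γ * Y) * (exp (-(Y / y₀)) - 1)

lemma initialSlopeBound_pos (hK₁ : 0 < K₁) (hγ : 0 < γ) (hM₁ : 0 < M₁)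
    (hM₂ : 0 < M₂) : 0 < initialSlopeBound K₁ γ M₁ M₂ := by
  have := soundP_pos hK₁ hγ hM₂
  unfold initialSlopeBound
  positivity

end GasLaw

/-- The forward Riemann invariant `s = u + η(τ)` of a pair of functions of space and time. Since
`(τ(-x, t), -u(-x, t))` solves the p-system along with `(τ, u)`, statements about the backward
invariant `r = u - η(τ)` are obtained from those about `s` by this reflection. -/
noncomputable def riemannS (K₁ γ : ℝ) (τ u : ℝ → ℝ → ℝ) (x t : ℝ) : ℝ :=
  u x t + etaP K₁ γ (τ x t)

/-- The weighted gradient `y = √c ∂ₓs`; the weight turns the equation for `∂ₓs` along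
characteristics into a pure Riccati equation. -/
noncomputable def weightedSlope (K₁ γ : ℝ) (τ u : ℝ → ℝ → ℝ) (x t : ℝ) : ℝ :=
  √(soundP K₁ γ (τ x t)) * derivX (riemannS K₁ γ τ u) x t

lemma AssumptionA.reflect {M₁ M₂ : ℝ} {τ₀ u₀ : ℝ → ℝ} (hA : AssumptionA M₁ M₂ τ₀ u₀) :
    AssumptionA M₁ M₂ (fun x => τ₀ (-x)) (fun x => -u₀ (-x)) := by
  obtain ⟨hτ, hu, hM₁, hM₂, hbound, hlower⟩ := hA
  refine ⟨hτ.comp contDiff_neg, (hu.comp contDiff_neg).neg, hM₁, hM₂, fun x => ?_,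
    fun x => hlower (-x)⟩
  simpa [deriv_comp_neg] using hbound (-x)

namespace PSysSol

variable {K₁ γ T b m M M₁ M₂ S Y ε x t t₀ : ℝ} {I J : Set ℝ} {k : ℕ} {τ u : ℝ → ℝ → ℝ} {X : ℝ → ℝ}

lemma mono (h : PSysSol K₁ γ I k τ u) (hJ : J ⊆ I) : PSysSol K₁ γ J k τ u := by
  obtain ⟨hpos, hτ, hu, hmass, hmomentum⟩ := h
  exact ⟨fun x t ht => hpos x t (hJ ht), hτ.mono (prod_mono_right hJ),
    hu.mono (prod_mono_right hJ), fun x t ht => hmass x t (hJ ht),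
    fun x t ht => hmomentum x t (hJ ht)⟩

lemma reflect (h : PSysSol K₁ γ I k τ u) :
    PSysSol K₁ γ I k (fun x t => τ (-x) t) (fun x t => -u (-x) t) := by
  obtain ⟨hpos, hτ, hu, hmass, hmomentum⟩ := h
  have hflip : ContDiffOn ℝ k (fun p : ℝ × ℝ => (-p.1, p.2)) (univ ×ˢ I) := by fun_prop
  have hmaps : MapsTo (fun p : ℝ × ℝ => (-p.1, p.2)) (univ ×ˢ I) (univ ×ˢ I) :=
    fun p hp => ⟨mem_univ _, hp.2⟩
  refine ⟨fun x => hpos (-x), hτ.comp hflip hmaps, (hu.comp hflip hmaps).neg,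
    fun x t ht => ?_, fun x t ht => ?_⟩
  · simpa [deriv_comp_neg (fun x => u x t) x] using hmass (-x) t ht
  · have hpressure := deriv_comp_neg (fun x => K₁ * τ x t ^ (-γ)) x
    rw [hpressure, deriv.fun_neg, ← neg_add, hmomentum (-x) t ht, neg_zero]

lemma tau_pos (h : PSysSol K₁ γ I 1 τ u) (ht : t ∈ I) : 0 < τ x t := h.1 x t ht

lemma contDiffOn_tau (h : PSysSol K₁ γ I 1 τ u) : ContDiffOn ℝ 1 (uncurry τ) (univ ×ˢ I) :=
  mod_cast h.2.1

lemma contDiffOn_u (h : PSysSol K₁ γ I 1 τ u) : ContDiffOn ℝ 1 (uncurry u) (univ ×ˢ I) :=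
  mod_cast h.2.2.1

lemma contDiffOn_etaP (h : PSysSol K₁ γ I 1 τ u) :
    ContDiffOn ℝ 1 (uncurry fun x t => etaP K₁ γ (τ x t)) (univ ×ˢ I) :=
  contDiffOn_const.mul (h.contDiffOn_tau.rpow_const_of_ne fun _ hp => (h.tau_pos hp.2).ne')

lemma contDiffOn_soundP (h : PSysSol K₁ γ I 1 τ u) :
    ContDiffOn ℝ 1 (uncurry fun x t => soundP K₁ γ (τ x t)) (univ ×ˢ I) :=
  contDiffOn_const.mul (h.contDiffOn_tau.rpow_const_of_ne fun _ hp => (h.tau_pos hp.2).ne')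

lemma contDiffOn_riemannS (h : PSysSol K₁ γ I 1 τ u) :
    ContDiffOn ℝ 1 (uncurry (riemannS K₁ γ τ u)) (univ ×ˢ I) :=
  h.contDiffOn_u.add h.contDiffOn_etaP

lemma derivX_riemannS (h : PSysSol K₁ γ I 1 τ u) (hγ : γ ≠ 1) (ht : t ∈ I) :
    derivX (riemannS K₁ γ τ u) x t
      = derivX u x t - soundP K₁ γ (τ x t) * derivX τ x t := by
  have hη := (hasDerivAt_etaP (K₁ := K₁) hγ (h.tau_pos (x := x) ht)).comp x
    (hasDerivAt_derivX h.contDiffOn_tau ht)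
  exact ((hasDerivAt_derivX h.contDiffOn_u ht).add hη).deriv.trans (by ring)

lemma derivX_soundP (h : PSysSol K₁ γ I 1 τ u) (ht : t ∈ I) :
    derivX (fun x t => soundP K₁ γ (τ x t)) x t
      = -(γ + 1) / 2 * soundP K₁ γ (τ x t) / τ x t * derivX τ x t := by
  have hc := (hasDerivAt_soundP (K₁ := K₁) (γ := γ) (h.tau_pos (x := x) ht)).comp x
    (hasDerivAt_derivX h.contDiffOn_tau ht)
  exact hc.deriv

lemma deriv_tau (h : PSysSol K₁ γ I 1 τ u) (ht : t ∈ I) : deriv (τ x) t = derivX u x t :=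
  sub_eq_zero.1 (h.2.2.2.1 x t ht)

lemma deriv_u (h : PSysSol K₁ γ I 1 τ u) (hK₁γ : 0 ≤ K₁ * γ) (ht : t ∈ I) :
    deriv (u x) t = soundP K₁ γ (τ x t) ^ 2 * derivX τ x t := by
  have hpressure : HasDerivAt (fun x' => K₁ * τ x' t ^ (-γ))
      (-(soundP K₁ γ (τ x t) ^ 2 * derivX τ x t)) x := by
    refine (((hasDerivAt_derivX h.contDiffOn_tau ht).rpow_const (p := -γ)
      (Or.inl (h.tau_pos ht).ne')).const_mul K₁).congr_deriv ?_
    rw [soundP_sq hK₁γ (h.tau_pos ht).le]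
    ring
  have hmomentum := h.2.2.2.2 x t ht
  rw [hpressure.deriv] at hmomentum
  exact add_neg_eq_zero.1 hmomentum

lemma riemannS_transport (h : PSysSol K₁ γ I 1 τ u) (hK₁γ : 0 ≤ K₁ * γ) (hγ : γ ≠ 1)
    (hI : I ∈ 𝓝 t) :
    deriv (riemannS K₁ γ τ u x) t
      + soundP K₁ γ (τ x t) * derivX (riemannS K₁ γ τ u) x t = 0 := by
  have ht : t ∈ I := mem_of_mem_nhds hI
  have hnhds : univ ×ˢ I ∈ 𝓝 (x, t) := prod_mem_nhds univ_mem hI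
  have hslice {f : ℝ → ℝ → ℝ} (hf : ContDiffOn ℝ 1 (uncurry f) (univ ×ˢ I)) :
      HasDerivAt (f x) (deriv (f x) t) t :=
    (((hf.contDiffAt hnhds).differentiableAt one_ne_zero).comp (f := fun t => (x, t)) t
      (by fun_prop)).hasDerivAt
  have hη := (hasDerivAt_etaP (K₁ := K₁) hγ (h.tau_pos (x := x) ht)).comp t
    (hslice h.contDiffOn_tau)
  have htime : deriv (riemannS K₁ γ τ u x) t
      = deriv (u x) t + -soundP K₁ γ (τ x t) * deriv (τ x) t :=
    ((hslice h.contDiffOn_u).add hη).deriv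
  rw [htime, h.deriv_tau ht, h.deriv_u hK₁γ ht, h.derivX_riemannS hγ ht]
  ring

section MaximumPrinciple

/-- `s` has derivative zero along the tangent to the characteristic. -/
lemma rate_nonpos_of_riemannS_line_le (h : PSysSol K₁ γ (Ico 0 T) 1 τ u) (hK₁γ : 0 ≤ K₁ * γ)
    (hγ : γ ≠ 1) (ht : t ∈ Ioo 0 T)
    (hle : ∀ t' ∈ Ico 0 t, riemannS K₁ γ τ u (x + soundP K₁ γ (τ x t) * (t' - t)) t' - ε * t'
      ≤ riemannS K₁ γ τ u x t - ε * t) : ε ≤ 0 := by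
  have hI : Ico 0 T ∈ 𝓝 t := Ico_mem_nhds ht.1 ht.2
  let line : ℝ → ℝ := fun t' => x + soundP K₁ γ (τ x t) * (t' - t)
  have hline : HasDerivAt line (soundP K₁ γ (τ x t)) t := by
    simpa [line] using
      (((hasDerivAt_id t).sub_const t).const_mul (soundP K₁ γ (τ x t))).const_add x
  have hline_t : line t = x := by simp [line]
  have hs : DifferentiableAt ℝ (uncurry (riemannS K₁ γ τ u)) (line t, t) :=
    (h.contDiffOn_riemannS.contDiffAt (prod_mem_nhds univ_mem hI)).differentiableAt one_ne_zero
  have halong : HasDerivAt (fun t' => riemannS K₁ γ τ u (line t') t') 0 t := by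
    refine (hasDerivAt_along_path hs hline).congr_deriv ?_
    rw [hline_t]
    exact h.riemannS_transport hK₁γ hγ hI
  have hnonneg := nonneg_of_hasDerivAt_of_forall_le ht.1
    (halong.sub ((hasDerivAt_id t).const_mul ε)) fun t' ht' => by simpa [line] using hle t' ht'
  linarith

lemma rate_nonpos_of_abs_add_etaP_line_le (h : PSysSol K₁ γ (Ico 0 T) 1 τ u)
    (hK₁γ : 0 ≤ K₁ * γ) (hγ : γ ≠ 1) (ht : t ∈ Ioo 0 T)
    (hle : ∀ v, |v| = |soundP K₁ γ (τ x t)| → ∀ t' ∈ Ico 0 t,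
      |u (x + v * (t' - t)) t'| + etaP K₁ γ (τ (x + v * (t' - t)) t') - ε * t'
        ≤ |u x t| + etaP K₁ γ (τ x t) - ε * t) : ε ≤ 0 := by
  rcases abs_cases (u x t) with ⟨hu, -⟩ | ⟨hu, -⟩
  · refine h.rate_nonpos_of_riemannS_line_le (x := x) hK₁γ hγ ht fun t' ht' => ?_
    have := hle _ rfl t' ht'
    grw [← le_abs_self, hu] at this
    exact this
  · refine h.reflect.rate_nonpos_of_riemannS_line_le (x := -x) hK₁γ hγ ht fun t' ht' => ?_
    have := hle (-soundP K₁ γ (τ x t)) (abs_neg _) t' ht'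
    grw [← neg_le_abs, hu] at this
    simpa [riemannS, neg_add_rev, add_comm] using this

lemma etaP_le (h : PSysSol K₁ γ (Ico 0 T) 1 τ u) (hK₁ : 0 < K₁) (hγ : 1 < γ)
    (hS : ∀ x, |u x 0| + etaP K₁ γ (τ x 0) ≤ S) (ht : t ∈ Ico 0 T) :
    etaP K₁ γ (τ x t) ≤ S := by
  by_contra! hlt
  have hK₁γ : 0 ≤ K₁ * γ := by positivity
  have hsound {x' t'} (ht' : t' ∈ Ico 0 T) : 0 < soundP K₁ γ (τ x' t') :=
    soundP_pos hK₁ (by linarith) (h.tau_pos ht')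
  obtain ⟨ε, hε, hεt⟩ : ∃ ε > 0, S + ε * (1 + t) = etaP K₁ γ (τ x t) :=
    have ht1 : 0 < 1 + t := by linarith [ht.1]
    ⟨(etaP K₁ γ (τ x t) - S) / (1 + t), div_pos (sub_pos.2 hlt) ht1, by field_simp; ring⟩
  let G : ℝ → ℝ → ℝ := fun x' t' => |u x' t'| + etaP K₁ γ (τ x' t') - (S + ε * (1 + t'))
  have hG : ContinuousOn (uncurry G) (univ ×ˢ Ico 0 T) :=
    (h.contDiffOn_u.continuousOn.abs.add h.contDiffOn_etaP.continuousOn).sub (by fun_prop)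
  have hcone : backwardCone x t (soundP K₁ γ (τ x t)) ⊆ univ ×ˢ Ico 0 T :=
    fun p hp => ⟨mem_univ _, hp.1.1, hp.1.2.trans_lt ht.2⟩
  obtain ⟨x₁, t₁, ht₁, hmem, hzero, hbefore⟩ := exists_first_zero_in_backwardCone
    (hsound ht).le ht.1 (hG.mono hcone) (fun x' => by linarith [hS x'])
    (show 0 ≤ |u x t| + _ - _ by linarith [abs_nonneg (u x t)])
  have ht₁T : t₁ ∈ Ico 0 T := (hcone hmem).2
  have hη : etaP K₁ γ (τ x₁ t₁) ≤ etaP K₁ γ (τ x t) := by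
    have : ε * t₁ ≤ ε * t := mul_le_mul_of_nonneg_left hmem.1.2 hε.le
    linarith [abs_nonneg (u x₁ t₁)]
  have hτ : τ x t ≤ τ x₁ t₁ :=
    ((strictAntiOn_etaP hK₁ hγ).le_iff_ge (h.tau_pos ht₁T) (h.tau_pos ht)).1 hη
  have hspeed : soundP K₁ γ (τ x₁ t₁) ≤ soundP K₁ γ (τ x t) :=
    antitoneOn_soundP (by linarith) (h.tau_pos ht) (h.tau_pos ht₁T) hτ
  refine hε.not_ge (h.rate_nonpos_of_abs_add_etaP_line_le (x := x₁) hK₁γ hγ.ne' ⟨ht₁, ht₁T.2⟩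
    fun v hv t' ht' => ?_)
  have hvC : |v| ≤ soundP K₁ γ (τ x t) := by rwa [hv, abs_of_pos (hsound ht₁T)]
  linarith [hbefore _ t' (line_mem_backwardCone hmem hvC ⟨ht'.1, ht'.2.le⟩) ht'.2]

lemma le_tau (h : PSysSol K₁ γ (Ico 0 T) 1 τ u) (hK₁ : 0 < K₁) (hγ : 1 < γ)
    (hA : AssumptionA M₁ M₂ (fun x => τ x 0) (fun x => u x 0)) (hm : 0 < m)
    (hηm : M₁ + etaP K₁ γ M₂ ≤ etaP K₁ γ m) (ht : t ∈ Ico 0 T) : m ≤ τ x t := by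
  obtain ⟨-, -, -, hM₂, hbound, hlower⟩ := hA
  have hinit : ∀ x, |u x 0| + etaP K₁ γ (τ x 0) ≤ etaP K₁ γ m := fun x => by
    have hη : etaP K₁ γ (τ x 0) ≤ etaP K₁ γ M₂ := (strictAntiOn_etaP hK₁ hγ).antitoneOn hM₂
      (hM₂.trans_le (hlower x)) (hlower x)
    linarith [hbound x, abs_nonneg (τ x 0), abs_nonneg (deriv (fun x => τ x 0) x),
      abs_nonneg (deriv (fun x => u x 0) x)]
  exact ((strictAntiOn_etaP hK₁ hγ).le_iff_ge (h.tau_pos ht) hm).1 (h.etaP_le hK₁ hγ hinit ht)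

end MaximumPrinciple

section RiccatiEquation

/-- Along a forward characteristic, `c' = -(γ + 1) / 2 * (c / τ) * (∂ₓu + c ∂ₓτ)`, where
`∂ₓu + c ∂ₓτ = ∂ₓs + 2 c ∂ₓτ`; its part in `c ∂ₓτ` cancels the term `-∂ₓc ∂ₓs` of `(∂ₓs)'`. -/
lemma hasDerivAt_weightedSlope (h : PSysSol K₁ γ I 1 τ u) (hK₁ : 0 < K₁) (hγ : 1 < γ)
    (hI : I ∈ 𝓝 t) (hX : ∀ᶠ t' in 𝓝 t, HasDerivAt X (soundP K₁ γ (τ (X t') t')) t') :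
    HasDerivAt (fun t' => weightedSlope K₁ γ τ u (X t') t')
      (-(riccatiCoeff K₁ γ (τ (X t) t) * weightedSlope K₁ γ τ u (X t) t ^ 2)) t := by
  have ht : t ∈ I := mem_of_mem_nhds hI
  have hK₁γ : 0 ≤ K₁ * γ := by positivity
  have hnhds : univ ×ˢ I ∈ 𝓝 (X t, t) := prod_mem_nhds univ_mem hI
  have hτpos : 0 < τ (X t) t := h.tau_pos ht
  have hcpos : 0 < soundP K₁ γ (τ (X t) t) := soundP_pos hK₁ (by linarith) hτpos
  have hτX : HasDerivAt (fun t' => τ (X t') t')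
      (derivX u (X t) t + soundP K₁ γ (τ (X t) t) * derivX τ (X t) t) t := by
    rw [← h.deriv_tau ht]
    exact hasDerivAt_along_path
      ((h.contDiffOn_tau.contDiffAt hnhds).differentiableAt one_ne_zero) hX.self_of_nhds
  have hweight := ((hasDerivAt_soundP (K₁ := K₁) (γ := γ) hτpos).comp
    (h := fun t' => τ (X t') t') t hτX).sqrt hcpos.ne'
  have hslope : HasDerivAt (fun t' => derivX (riemannS K₁ γ τ u) (X t') t') _ t :=
    hasDerivAt_derivX_along_characteristic (h.contDiffOn_soundP.contDiffAt hnhds)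
      (h.contDiffOn_riemannS.contDiffAt hnhds) hX <| by
        filter_upwards [continuous_snd.continuousAt.eventually (eventually_mem_nhds_iff.2 hI)]
          with p hp using h.riemannS_transport hK₁γ hγ.ne' hp
  refine (hweight.mul hslope).congr_deriv ?_
  rw [h.derivX_soundP ht, h.derivX_riemannS hγ.ne' ht, riccatiCoeff, weightedSlope,
    h.derivX_riemannS hγ.ne' ht]
  simp only [Function.comp_apply]
  have hsqrt : 0 < √(soundP K₁ γ (τ (X t) t)) := sqrt_pos.2 hcpos
  rw [show soundP K₁ γ (τ (X t) t) = √(soundP K₁ γ (τ (X t) t)) ^ 2 from (sq_sqrt hcpos.le).symm]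
  rw [sqrt_sq hsqrt.le]
  field_simp
  ring

lemma exists_weightedSlope_characteristic (h : PSysSol K₁ γ (Ico 0 T) 1 τ u) (hK₁ : 0 < K₁)
    (hγ : 1 < γ) (hm : 0 < m) (hmτ : ∀ x, ∀ t ∈ Ico 0 T, m ≤ τ x t) (hb : b < T) (x : ℝ)
    (ht₀ : t₀ ∈ Icc 0 b) :
    ∃ X : ℝ → ℝ, X t₀ = x ∧
      ContinuousOn (fun t => weightedSlope K₁ γ τ u (X t) t) (Icc 0 b) ∧
      ∀ t ∈ Ioo 0 b, HasDerivAt (fun t => weightedSlope K₁ γ τ u (X t) t)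
        (-(riccatiCoeff K₁ γ (τ (X t) t) * weightedSlope K₁ γ τ u (X t) t ^ 2)) t := by
  have hIcc : Icc 0 b ⊆ Ico 0 T := Icc_subset_Ico_right hb
  have hspeed : ∀ x, ∀ t ∈ Icc 0 b, |soundP K₁ γ (τ x t)| ≤ soundP K₁ γ m := fun x t ht => by
    rw [abs_of_pos (soundP_pos hK₁ (by linarith) (h.tau_pos (hIcc ht)))]
    exact antitoneOn_soundP (by linarith) hm (h.tau_pos (hIcc ht)) (hmτ x t (hIcc ht))
  obtain ⟨X, hX₀, hX⟩ := exists_characteristic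
    (h.contDiffOn_soundP.mono (prod_mono_right hIcc)) hspeed x ht₀
  have hpath : ContinuousOn (fun t => (X t, t)) (Icc 0 b) :=
    (HasDerivWithinAt.continuousOn hX).prodMk continuousOn_id
  have hslope : ContinuousOn (uncurry (weightedSlope K₁ γ τ u)) (univ ×ˢ Ico 0 T) :=
    (h.contDiffOn_soundP.continuousOn.sqrt).mul
      (continuousOn_derivX (uniqueDiffOn_Ico 0 T) h.contDiffOn_riemannS)
  refine ⟨X, hX₀, hslope.comp hpath fun t ht => ⟨mem_univ _, hIcc ht⟩, fun t ht => ?_⟩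
  refine h.hasDerivAt_weightedSlope hK₁ hγ (Ico_mem_nhds ht.1 (ht.2.trans hb)) ?_
  filter_upwards [Ioo_mem_nhds ht.1 ht.2] with t' ht'
  exact (hX t' (Ioo_subset_Icc_self ht')).hasDerivAt (Icc_mem_nhds ht'.1 ht'.2)

lemma weightedSlope_le (h : PSysSol K₁ γ (Ico 0 T) 1 τ u) (hK₁ : 0 < K₁) (hγ : 1 < γ)
    (hm : 0 < m) (hmτ : ∀ x, ∀ t ∈ Ico 0 T, m ≤ τ x t)
    (hY : ∀ x, weightedSlope K₁ γ τ u x 0 ≤ Y) (ht : t ∈ Ico 0 T) :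
    weightedSlope K₁ γ τ u x t ≤ Y := by
  obtain ⟨X, rfl, hcont, hderiv⟩ :=
    h.exists_weightedSlope_characteristic hK₁ hγ hm hmτ ht.2 x ⟨ht.1, le_rfl⟩
  refine (antitoneOn_of_riccati hcont hderiv (fun t' ht' => ?_) ⟨le_rfl, ht.1⟩ ⟨ht.1, le_rfl⟩
    ht.1).trans (hY (X 0))
  exact (riccatiCoeff_pos hK₁ (by linarith) (h.tau_pos ⟨ht'.1.le, ht'.2.trans ht.2⟩)).le

lemma weightedSlope_add_reflect (h : PSysSol K₁ γ I 1 τ u) (hγ : γ ≠ 1) (ht : t ∈ I) :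
    weightedSlope K₁ γ τ u x t
      + weightedSlope K₁ γ (fun x t => τ (-x) t) (fun x t => -u (-x) t) (-x) t
      = 2 * (√(soundP K₁ γ (τ x t)) * derivX u x t) := by
  have hu : derivX (fun x t => -u (-x) t) (-x) t = derivX u x t := by
    rw [derivX_neg_left (fun x t => -u x t), neg_neg, derivX, deriv.fun_neg, neg_neg, derivX]
  rw [weightedSlope, weightedSlope, h.derivX_riemannS hγ ht, h.reflect.derivX_riemannS hγ ht,
    derivX_neg_left, hu]
  simp only [neg_neg]
  ring

lemma weightedSlope_zero_le (h : PSysSol K₁ γ (Ico 0 T) 1 τ u) (hK₁ : 0 < K₁) (hγ : 1 < γ)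
    (hT : 0 < T) (hA : AssumptionA M₁ M₂ (fun x => τ x 0) (fun x => u x 0)) :
    weightedSlope K₁ γ τ u x 0 ≤ initialSlopeBound K₁ γ M₁ M₂ := by
  obtain ⟨-, -, hM₁, hM₂, hbound, hlower⟩ := hA
  have h0 : (0 : ℝ) ∈ Ico 0 T := ⟨le_rfl, hT⟩
  have hγ' : 0 < γ := by linarith
  have hc : soundP K₁ γ (τ x 0) ≤ soundP K₁ γ M₂ :=
    antitoneOn_soundP (by linarith) hM₂ (h.tau_pos h0) (hlower x)
  have hc₀ := soundP_pos hK₁ hγ' hM₂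
  have hcpos := soundP_pos hK₁ hγ' (h.tau_pos (x := x) h0)
  have hC1 : |τ x 0| + |derivX τ x 0| + |u x 0| + |derivX u x 0| ≤ M₁ := hbound x
  have hτx : |derivX τ x 0| ≤ M₁ := by
    linarith [abs_nonneg (τ x 0), abs_nonneg (u x 0), abs_nonneg (derivX u x 0)]
  have hux : |derivX u x 0| ≤ M₁ := by
    linarith [abs_nonneg (τ x 0), abs_nonneg (u x 0), abs_nonneg (derivX τ x 0)]
  have hslope : derivX (riemannS K₁ γ τ u) x 0 ≤ M₁ + soundP K₁ γ M₂ * M₁ := by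
    rw [h.derivX_riemannS hγ.ne' h0]
    calc derivX u x 0 - soundP K₁ γ (τ x 0) * derivX τ x 0
        ≤ |derivX u x 0| + soundP K₁ γ (τ x 0) * |derivX τ x 0| := by
          rw [sub_eq_add_neg, ← mul_neg]
          gcongr
          exacts [le_abs_self _, neg_le_abs _]
      _ ≤ M₁ + soundP K₁ γ M₂ * M₁ := by gcongr
  exact (mul_le_mul_of_nonneg_left hslope (sqrt_nonneg _)).trans
    (mul_le_mul_of_nonneg_right (sqrt_le_sqrt hc) (by positivity))

end RiccatiEquation

section Lifespan

lemma sqrt_soundP_mul_derivX_u_le (h : PSysSol K₁ γ (Ico 0 T) 1 τ u) (hK₁ : 0 < K₁) (hγ : 1 < γ)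
    (hA : AssumptionA M₁ M₂ (fun x => τ x 0) (fun x => u x 0)) (hm : 0 < m)
    (hmτ : ∀ x, ∀ t ∈ Ico 0 T, m ≤ τ x t) (ht : t ∈ Ico 0 T) :
    √(soundP K₁ γ (τ x t)) * derivX u x t ≤ initialSlopeBound K₁ γ M₁ M₂ := by
  have hT : 0 < T := ht.1.trans_lt ht.2
  have hforward := h.weightedSlope_le hK₁ hγ hm hmτ
    (fun x => h.weightedSlope_zero_le (x := x) hK₁ hγ hT hA) (x := x) ht
  have hbackward := h.reflect.weightedSlope_le hK₁ hγ hm (fun x => hmτ (-x))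
    (fun x => h.reflect.weightedSlope_zero_le (x := x) hK₁ hγ hT hA.reflect) (x := -x) ht
  linarith [h.weightedSlope_add_reflect (x := x) hγ.ne' ht]

lemma hasDerivAt_rpow_tau (h : PSysSol K₁ γ I 1 τ u) (hK₁ : 0 < K₁) (hγ : 0 < γ)
    (hI : I ∈ 𝓝 t) :
    HasDerivAt (fun t => τ x t ^ ((3 - γ) / 4))
      ((3 - γ) / 4 / √(√(K₁ * γ)) * (√(soundP K₁ γ (τ x t)) * derivX u x t)) t := by
  have ht : t ∈ I := mem_of_mem_nhds hI
  have hpos : 0 < τ x t := h.tau_pos ht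
  have hτ : HasDerivAt (τ x) (derivX u x t) t := by
    rw [← h.deriv_tau ht]
    exact (((h.contDiffOn_tau.contDiffAt (prod_mem_nhds univ_mem hI)).differentiableAt
      one_ne_zero).comp (f := fun t => (x, t)) t (by fun_prop)).hasDerivAt
  refine (hτ.rpow_const (p := (3 - γ) / 4) (Or.inl hpos.ne')).congr_deriv ?_
  have hexp : (3 - γ) / 4 - 1 = -(γ + 1) / 4 := by ring
  have : 0 < √(√(K₁ * γ)) := by positivity
  rw [sqrt_soundP hpos.le, hexp]
  field_simp

lemma rpow_tau_le_of_le_three (h : PSysSol K₁ γ (Ico 0 T) 1 τ u) (hK₁ : 0 < K₁) (hγ : 1 < γ)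
    (hγ3 : γ ≤ 3) (hY : 0 ≤ Y)
    (hux : ∀ t ∈ Ico 0 T, √(soundP K₁ γ (τ x t)) * derivX u x t ≤ Y) (ht : t ∈ Ico 0 T) :
    τ x t ^ ((3 - γ) / 4) ≤ τ x 0 ^ ((3 - γ) / 4) + riccatiConst K₁ γ * Y * t := by
  have hIcc : Icc 0 t ⊆ Ico 0 T := Icc_subset_Ico_right ht.2
  have hcont : ContinuousOn (fun t' => τ x t' ^ ((3 - γ) / 4) - riccatiConst K₁ γ * Y * t')
      (Icc 0 t) := by
    have hτ : ContinuousOn (τ x) (Icc 0 t) := h.contDiffOn_tau.continuousOn.comp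
      (f := fun t' => (x, t')) (by fun_prop) fun t' ht' => ⟨mem_univ x, hIcc ht'⟩
    exact (hτ.rpow_const fun t' ht' => Or.inl (h.tau_pos (hIcc ht')).ne').sub (by fun_prop)
  have hderiv : ∀ t' ∈ Ioo 0 t, HasDerivAt
      (fun t' => τ x t' ^ ((3 - γ) / 4) - riccatiConst K₁ γ * Y * t')
      ((3 - γ) / 4 / √(√(K₁ * γ)) * (√(soundP K₁ γ (τ x t')) * derivX u x t')
        - riccatiConst K₁ γ * Y) t' := fun t' ht' =>
    (h.hasDerivAt_rpow_tau hK₁ (by linarith) (Ico_mem_nhds ht'.1 (ht'.2.trans ht.2))).sub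
      (hasDerivAt_const_mul _)
  have hcoeff : (3 - γ) / 4 / √(√(K₁ * γ)) ≤ riccatiConst K₁ γ := by
    rw [riccatiConst, ← div_div]
    gcongr
    linarith
  have hdecay := antitoneOn_Icc_of_hasDerivAt_nonpos hcont hderiv
    (fun t' ht' => sub_nonpos.2 <|
      (mul_le_mul_of_nonneg_left (hux t' (hIcc ⟨ht'.1.le, ht'.2.le⟩))
        (div_nonneg (by linarith) (sqrt_nonneg _))).trans (mul_le_mul_of_nonneg_right hcoeff hY))
    ⟨le_rfl, ht.1⟩ ⟨ht.1, le_rfl⟩ ht.1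
  simp only [mul_zero, sub_zero] at hdecay
  linarith

lemma rpow_tau_le (h : PSysSol K₁ γ (Ico 0 T) 1 τ u) (hK₁ : 0 < K₁) (hγ : 1 < γ) (hm : 0 < m)
    (hmτ : ∀ x, ∀ t ∈ Ico 0 T, m ≤ τ x t) (hM : ∀ x, τ x 0 ≤ M) (hY : 0 ≤ Y)
    (hux : ∀ x, ∀ t ∈ Ico 0 T, √(soundP K₁ γ (τ x t)) * derivX u x t ≤ Y) (ht : t ∈ Ico 0 T) :
    τ x t ^ ((3 - γ) / 4)
      ≤ m ^ ((3 - γ) / 4) + M ^ ((3 - γ) / 4) + riccatiConst K₁ γ * Y * t := by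
  have hinit : 0 < τ x 0 := h.tau_pos ⟨le_rfl, ht.1.trans_lt ht.2⟩
  rcases le_total γ 3 with hγ3 | hγ3
  · have hM' : τ x 0 ^ ((3 - γ) / 4) ≤ M ^ ((3 - γ) / 4) :=
      rpow_le_rpow hinit.le (hM x) (by linarith)
    linarith [h.rpow_tau_le_of_le_three hK₁ hγ hγ3 hY (hux x) ht, rpow_nonneg hm.le ((3 - γ) / 4)]
  · have hm' : τ x t ^ ((3 - γ) / 4) ≤ m ^ ((3 - γ) / 4) :=
      rpow_le_rpow_of_nonpos hm (hmτ x t ht) (by linarith)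
    have hgrowth : 0 ≤ riccatiConst K₁ γ * Y * t :=
      mul_nonneg (mul_nonneg (riccatiConst_pos hK₁ (by linarith)).le hY) ht.1
    linarith [rpow_nonneg (hinit.le.trans (hM x)) ((3 - γ) / 4)]

lemma lt_lifespanBound (h : PSysSol K₁ γ (Ico 0 T) 1 τ u) (hK₁ : 0 < K₁) (hγ : 1 < γ)
    (hm : 0 < m) (hmτ : ∀ x, ∀ t ∈ Ico 0 T, m ≤ τ x t) (hM : ∀ x, τ x 0 ≤ M) (hY : 0 < Y)
    (hux : ∀ x, ∀ t ∈ Ico 0 T, √(soundP K₁ γ (τ x t)) * derivX u x t ≤ Y)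
    (hx : weightedSlope K₁ γ τ u x 0 < 0) (hb : b ∈ Ico 0 T) :
    b < lifespanBound K₁ γ m M Y (weightedSlope K₁ γ τ u x 0) := by
  have hα : 0 < riccatiConst K₁ γ := riccatiConst_pos hK₁ (by linarith)
  have hM₀ : 0 ≤ M := (h.tau_pos ⟨le_rfl, hb.1.trans_lt hb.2⟩).le.trans (hM x)
  have hA : 0 < m ^ ((3 - γ) / 4) + M ^ ((3 - γ) / 4) :=
    add_pos_of_pos_of_nonneg (rpow_pos_of_pos hm _) (rpow_nonneg hM₀ _)
  obtain ⟨X, rfl, hcont, hderiv⟩ :=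
    h.exists_weightedSlope_characteristic hK₁ hγ hm hmτ hb.2 x ⟨le_rfl, hb.1⟩
  have hcoeff : ∀ t ∈ Ioo 0 b, riccatiConst K₁ γ /
      (m ^ ((3 - γ) / 4) + M ^ ((3 - γ) / 4) + riccatiConst K₁ γ * Y * t)
      ≤ riccatiCoeff K₁ γ (τ (X t) t) := fun t ht => by
    have htT : t ∈ Ico 0 T := ⟨ht.1.le, ht.2.trans hb.2⟩
    have hτ : 0 < τ (X t) t := h.tau_pos htT
    rw [riccatiCoeff_eq hτ]
    gcongr
    exact h.rpow_tau_le hK₁ hγ hm hmτ hM hY.le hux htT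
  have hlt := riccati_lifespan_lt (y := fun t => weightedSlope K₁ γ τ u (X t) t) hA
    (mul_pos hα hY) hα hb.1 hcont hderiv hcoeff hx
  rwa [mul_div_mul_left _ _ hα.ne'] at hlt

end Lifespan

end PSysSol

lemma exists_lifespan_bound_of_deriv_riemannS_neg {K₁ γ M₁ M₂ x₀ : ℝ} {τ₀ u₀ : ℝ → ℝ}
    (hK₁ : 0 < K₁) (hγ : 1 < γ) (hA : AssumptionA M₁ M₂ τ₀ u₀)
    (hx₀ : deriv (fun x => u₀ x + etaP K₁ γ (τ₀ x)) x₀ < 0) :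
    ∃ T₀, ∀ T > T₀, ¬ ∃ τ u : ℝ → ℝ → ℝ,
      PSysSol K₁ γ (Ico 0 T) 1 τ u ∧ (∀ x, τ x 0 = τ₀ x) ∧ (∀ x, u x 0 = u₀ x) := by
  have ⟨hM₁, hM₂, hbound, hlower⟩ := hA.2.2
  have hγ₀ : 0 < γ := by linarith
  obtain ⟨m, hm, hηm⟩ := exists_le_etaP hK₁ hγ (M₁ + etaP K₁ γ M₂)
  refine ⟨max 0 (lifespanBound K₁ γ m M₁ (initialSlopeBound K₁ γ M₁ M₂)
    (√(soundP K₁ γ (τ₀ x₀)) * deriv (fun x => u₀ x + etaP K₁ γ (τ₀ x)) x₀)), ?_⟩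
  rintro T hT ⟨τ, u, h, hτ, hu⟩
  obtain rfl : (fun x => τ x 0) = τ₀ := funext hτ
  obtain rfl : (fun x => u x 0) = u₀ := funext hu
  have hmτ : ∀ x, ∀ t ∈ Ico 0 T, m ≤ τ x t := fun x t => h.le_tau hK₁ hγ hA hm hηm
  have hM : ∀ x, τ x 0 ≤ M₁ := fun x => by
    linarith [hbound x, le_abs_self (τ x 0), abs_nonneg (deriv (fun x => τ x 0) x),
      abs_nonneg (u x 0), abs_nonneg (deriv (fun x => u x 0) x)]
  have hslope : weightedSlope K₁ γ τ u x₀ 0 < 0 :=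
    mul_neg_of_pos_of_neg (sqrt_pos.2 (soundP_pos hK₁ hγ₀ (hM₂.trans_le (hlower x₀)))) hx₀
  exact (h.lt_lifespanBound hK₁ hγ hm hmτ hM (initialSlopeBound_pos hK₁ hγ₀ hM₁ hM₂)
    (fun x t ht => h.sqrt_soundP_mul_derivX_u_le hK₁ hγ hA hm hmτ ht) hslope
    ⟨le_max_left _ _, hT⟩).not_ge (le_max_right _ _)

theorem psystem_blowup_of_initial_compression_general
    (K₁ γ M₁ M₂ : ℝ) (hK₁ : 0 < K₁) (hγ : 1 < γ)
    (τ₀ u₀ : ℝ → ℝ) (hA : AssumptionA M₁ M₂ τ₀ u₀)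
    (hcomp : ∃ xstar : ℝ,
      deriv (fun x => u₀ x + etaP K₁ γ (τ₀ x)) xstar < 0 ∨
      deriv (fun x => u₀ x - etaP K₁ γ (τ₀ x)) xstar < 0) :
    ∃ T₀, ∀ T > T₀, ¬ ∃ τ u : ℝ → ℝ → ℝ,
      PSysSol K₁ γ (Ico 0 T) 1 τ u ∧ (∀ x, τ x 0 = τ₀ x) ∧ (∀ x, u x 0 = u₀ x) := by
  obtain ⟨x, hs | hr⟩ := hcomp
  · exact exists_lifespan_bound_of_deriv_riemannS_neg hK₁ hγ hA hs
  · have hreflected : deriv (fun y => -u₀ (-y) + etaP K₁ γ (τ₀ (-y))) (-x) < 0 := by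
      have hodd := deriv_comp_neg (fun y => etaP K₁ γ (τ₀ y) - u₀ y) (-x)
      rw [neg_neg, ← deriv.fun_neg] at hodd
      simpa only [neg_sub, neg_add_eq_sub, hodd] using hr
    obtain ⟨T₀, hT₀⟩ := exists_lifespan_bound_of_deriv_riemannS_neg hK₁ hγ hA.reflect hreflected
    refine ⟨T₀, fun T hT ⟨τ, u, h, hτ, hu⟩ => hT₀ T hT ⟨_, _, h.reflect, fun y => hτ (-y), ?_⟩⟩
    exact fun y => congrArg Neg.neg (hu (-y))

/-- Theorem 2.2 (necessity): for `γ > 1` and initial data satisfying Assumption A, if the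
initial data are compressive somewhere (`s_x(x*,0) < 0` or `r_x(x*,0) < 0`), then the
gradients blow up in finite time: there is no global-in-time `C¹` solution of the
p-system on `ℝ × [0,∞)` with this initial data. -/
theorem psystem_blowup_of_initial_compression
    (K₁ γ M₁ M₂ : ℝ) (hK₁ : 0 < K₁) (hγ : 1 < γ)
    (τ₀ u₀ : ℝ → ℝ) (hA : AssumptionA M₁ M₂ τ₀ u₀)
    (hcomp : ∃ xstar : ℝ,
      deriv (fun x => u₀ x + etaP K₁ γ (τ₀ x)) xstar < 0 ∨
      deriv (fun x => u₀ x - etaP K₁ γ (τ₀ x)) xstar < 0) :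
    ¬ ∃ τ u : ℝ → ℝ → ℝ,
        PSysSol K₁ γ (Set.Ici 0) 1 τ u ∧ (∀ x, τ x 0 = τ₀ x) ∧ (∀ x, u x 0 = u₀ x) := by
  rintro ⟨τ, u, h, hτ, hu⟩
  obtain ⟨T₀, hT₀⟩ :=
    psystem_blowup_of_initial_compression_general K₁ γ M₁ M₂ hK₁ hγ τ₀ u₀ hA hcomp
  exact hT₀ (T₀ + 1) (lt_add_one T₀) ⟨τ, u, h.mono Ico_subset_Ici_self, hτ, hu⟩
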